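/- Let Z₁ and Z₂ be independent random variables on a probability space, each standard normally distributed (law gaussianReal 0 1). Let μ₁, μ₂ ∈ ℝ, σ₁, σ₂ > 0, ρ ∈ (-1,1), and define X₁ = μ₁ + σ₁·Z₁ and X₂ = μ₂ + σ₂·(ρ·Z₁ + √(1-ρ²)·Z₂). Set θ = √(σ₁² + σ₂² − 2ρσ₁σ₂) (assumed positive) and δ = (μ₂ − μ₁)/θ, and let Y = min{X₁, X₂}. Then E[Y²] = (σ₁² + μ₁²)·Φ(δ) + (σ₂² + μ₂²)·Φ(−δ) − (μ₁ + μ₂)·θ·φ(δ), where φ and Φ denote the probability density function and cumulative distribution function of the standard normal distribution. -/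

import Mathlib

open MeasureTheory ProbabilityTheory

/-- The standard normal probability density function `φ`. -/
noncomputable def stdNormalPdf (x : ℝ) : ℝ :=
  (Real.sqrt (2 * Real.pi))⁻¹ * Real.exp (-x ^ 2 / 2)

/-- The standard normal cumulative distribution function `Φ`. -/
noncomputable def stdNormalCdf (x : ℝ) : ℝ :=
  ∫ t in Set.Iic x, stdNormalPdf t

lemma aux_pdf_eq (x : ℝ) : gaussianPDFReal 0 1 x = stdNormalPdf x := by
  simp [gaussianPDFReal, stdNormalPdf]

lemma aux_int_one : Integrable stdNormalPdf := by
  have h := integrable_gaussianPDFReal 0 1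
  exact h.congr (ae_of_all _ fun x => aux_pdf_eq x)

lemma aux_cdf_neg (δ : ℝ) : stdNormalCdf (-δ) = 1 - stdNormalCdf δ := by
  have h1 : ∫ x, stdNormalPdf x = 1 := by
    rw [← integral_gaussianPDFReal_eq_one 0 (one_ne_zero : (1 : NNReal) ≠ 0)]
    exact integral_congr_ae (ae_of_all _ fun x => (aux_pdf_eq x).symm)
  have h2 := integral_add_compl (measurableSet_Iic (a := δ)) aux_int_one
  have h3 := integral_comp_neg_Iic (-δ) stdNormalPdf
  have h4 : ∀ x, stdNormalPdf (-x) = stdNormalPdf x := fun x => by simp [stdNormalPdf]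
  simp only [h4, neg_neg] at h3
  rw [Set.compl_Iic] at h2
  unfold stdNormalCdf
  linarith

lemma aux_int_poly (p q r : ℝ) : Integrable (fun u : ℝ => p * u ^ 2 + q * u + r) (gaussianReal 0 1) := by
  have h : MemLp (fun x : ℝ => x) 2 (gaussianReal 0 1) := memLp_id_gaussianReal' 2 (by simp)
  have h1 : Integrable (fun x : ℝ => x) (gaussianReal 0 1) := h.integrable (by norm_num)
  exact ((h.integrable_sq.const_mul p).add (h1.const_mul q)).add (integrable_const r)

lemma aux_int_poly' (p q r : ℝ) :
    Integrable (fun u : ℝ => (p * u ^ 2 + q * u + r) * stdNormalPdf u) := by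
  have e1 := integrable_exp_neg_mul_sq (b := 1 / 2) (by norm_num)
  have e2 := integrable_mul_exp_neg_mul_sq (b := 1 / 2) (by norm_num)
  have e3 := integrable_rpow_mul_exp_neg_mul_sq (b := 1 / 2) (by norm_num) (s := 2) (by norm_num)
  have := (((e3.const_mul p).add (e2.const_mul q)).add (e1.const_mul r)).const_mul
    (Real.sqrt (2 * Real.pi))⁻¹
  refine this.congr (ae_of_all _ fun x => ?_)
  have hx : -(1 / 2) * x ^ 2 = - x ^ 2 / 2 := by ring
  simp only [stdNormalPdf, Pi.add_apply, hx, Real.rpow_two]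
  ring

lemma aux_deriv (p q x : ℝ) : HasDerivAt (fun u => (p * u + q) * stdNormalPdf u)
    ((-p * x ^ 2 + -q * x + p) * stdNormalPdf x) x := by
  unfold stdNormalPdf
  have h1 : HasDerivAt (fun u : ℝ => -u ^ 2 / 2) (-x) x := by
    have := ((hasDerivAt_pow 2 x).neg).div_const 2
    refine this.congr_deriv ?_
    simp
    ring
  have h2 := (h1.exp).const_mul (Real.sqrt (2 * Real.pi))⁻¹
  have h3 := (((hasDerivAt_id x).const_mul p).add_const q).mul h2
  refine h3.congr_deriv ?_
  simp
  ring

lemma aux_tendsto (p q : ℝ) :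
    Filter.Tendsto (fun u => (p * u + q) * stdNormalPdf u) Filter.atBot (nhds 0) := by
  refine tendsto_zero_of_hasDerivAt_of_integrableOn_Iic (a := 0)
    (fun x _ => aux_deriv p q x) (aux_int_poly' _ _ _).integrableOn ?_
  have := aux_int_poly' 0 p q
  simp only [zero_mul, zero_add] at this
  exact this.integrableOn

lemma aux_key (δ M c : ℝ) :
    ∫ u, (Set.Iic δ).indicator (fun u => (u - δ) * (M + c * u)) u ∂(gaussianReal 0 1) =
      (c - δ * M) * stdNormalCdf δ - M * stdNormalPdf δ := by
  rw [integral_gaussianReal_eq_integral_smul one_ne_zero]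
  have h1 : ∀ u, gaussianPDFReal 0 1 u • (Set.Iic δ).indicator (fun u => (u - δ) * (M + c * u)) u =
      (Set.Iic δ).indicator (fun u => (- -c * u ^ 2 + -(-(M - δ * c)) * u + -c) * stdNormalPdf u
        + (c - δ * M) * stdNormalPdf u) u := by
    intro u
    rw [aux_pdf_eq]
    by_cases hu : u ∈ Set.Iic δ
    · simp only [Set.indicator_of_mem hu, smul_eq_mul]; ring
    · simp [Set.indicator_of_notMem hu]
  simp_rw [h1]
  rw [integral_indicator measurableSet_Iic, integral_add (aux_int_poly' _ _ _).integrableOn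
    (aux_int_one.const_mul _).integrableOn, integral_const_mul,
    integral_Iic_of_hasDerivAt_of_tendsto' (fun x _ => aux_deriv (-c) (-(M - δ * c)) x)
      (aux_int_poly' _ _ _).integrableOn (aux_tendsto _ _)]
  unfold stdNormalCdf
  ring

lemma aux_mean {Ω : Type*} [MeasureSpace Ω] (Z : Ω → ℝ) (hm : Measurable Z)
    (hZ : Measure.map Z ℙ = gaussianReal 0 1) : ∫ ω, Z ω = 0 := by
  have := integral_map (μ := (ℙ : Measure Ω)) hm.aemeasurable (f := fun x : ℝ => x)
    (by fun_prop)
  rw [← this, hZ, integral_id_gaussianReal]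

lemma aux_sq {Ω : Type*} [MeasureSpace Ω] (Z : Ω → ℝ) (hm : Measurable Z)
    (hZ : Measure.map Z ℙ = gaussianReal 0 1) : ∫ ω, Z ω ^ 2 = 1 := by
  have := integral_map (μ := (ℙ : Measure Ω)) hm.aemeasurable (f := fun x : ℝ => x ^ 2)
    (by fun_prop)
  rw [← this, hZ]
  have h := variance_fun_id_gaussianReal (μ := 0) (v := 1)
  rw [variance_of_integral_eq_zero (by fun_prop) integral_id_gaussianReal] at h
  simpa using h

lemma aux_memLp {Ω : Type*} [MeasureSpace Ω] (Z : Ω → ℝ) (hm : Measurable Z)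
    (hZ : Measure.map Z ℙ = gaussianReal 0 1) : MemLp Z 2 ℙ := by
  have h : MemLp (fun x : ℝ => x) 2 (gaussianReal 0 1) := memLp_id_gaussianReal' 2 (by simp)
  rw [← hZ] at h
  exact h.comp_of_map hm.aemeasurable

lemma aux_bil {Ω : Type*} [MeasureSpace Ω] [IsProbabilityMeasure (ℙ : Measure Ω)]
    (Z₁ Z₂ : Ω → ℝ) (hZ₁m : Measurable Z₁) (hZ₂m : Measurable Z₂)
    (hZ₁ : Measure.map Z₁ ℙ = gaussianReal 0 1)
    (hZ₂ : Measure.map Z₂ ℙ = gaussianReal 0 1)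
    (hindep : IndepFun Z₁ Z₂ ℙ) (m a b c d : ℝ) :
    ∫ ω, (m + a * Z₁ ω + b * Z₂ ω) * (m + c * Z₁ ω + d * Z₂ ω) = m ^ 2 + a * c + b * d := by
  have l1 := aux_memLp Z₁ hZ₁m hZ₁
  have l2 := aux_memLp Z₂ hZ₂m hZ₂
  have i1 : Integrable Z₁ := l1.integrable (by norm_num)
  have i2 : Integrable Z₂ := l2.integrable (by norm_num)
  have i11 : Integrable (fun ω => Z₁ ω ^ 2) := l1.integrable_sq
  have i22 : Integrable (fun ω => Z₂ ω ^ 2) := l2.integrable_sq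
  have i12 : Integrable (fun ω => Z₁ ω * Z₂ ω) := l1.integrable_mul l2
  have h12 := hindep.integral_fun_mul_eq_mul_integral i1.aestronglyMeasurable i2.aestronglyMeasurable
  have e : ∀ ω, (m + a * Z₁ ω + b * Z₂ ω) * (m + c * Z₁ ω + d * Z₂ ω) =
    m ^ 2 + (m * a + m * c) * Z₁ ω + (m * b + m * d) * Z₂ ω + (a * c) * Z₁ ω ^ 2
      + (b * d) * Z₂ ω ^ 2 + (a * d + b * c) * (Z₁ ω * Z₂ ω) := fun ω => by ring
  simp_rw [e]
  rw [integral_add (by fun_prop) (by fun_prop), integral_add (by fun_prop) (by fun_prop),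
    integral_add (by fun_prop) (by fun_prop), integral_add (by fun_prop) (by fun_prop),
    integral_add (by fun_prop) (by fun_prop)]
  simp only [integral_const_mul, h12, aux_mean Z₁ hZ₁m hZ₁, aux_mean Z₂ hZ₂m hZ₂,
    aux_sq Z₁ hZ₁m hZ₁, aux_sq Z₂ hZ₂m hZ₂]
  simp

lemma aux_rot {Ω : Type*} [MeasureSpace Ω] [IsProbabilityMeasure (ℙ : Measure Ω)]
    (Z₁ Z₂ : Ω → ℝ) (hZ₁m : Measurable Z₁) (hZ₂m : Measurable Z₂)
    (hZ₁ : Measure.map Z₁ ℙ = gaussianReal 0 1)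
    (hZ₂ : Measure.map Z₂ ℙ = gaussianReal 0 1)
    (hindep : IndepFun Z₁ Z₂ ℙ) (a b : ℝ) (hab : a ^ 2 + b ^ 2 = 1) :
    Measure.map (fun ω => a * Z₁ ω + b * Z₂ ω) ℙ = gaussianReal 0 1 ∧
    IndepFun (fun ω => a * Z₁ ω + b * Z₂ ω) (fun ω => -b * Z₁ ω + a * Z₂ ω) ℙ := by
  have l1 := aux_memLp Z₁ hZ₁m hZ₁
  have l2 := aux_memLp Z₂ hZ₂m hZ₂
  have i1 : Integrable Z₁ := l1.integrable (by norm_num)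
  have i2 : Integrable Z₂ := l2.integrable (by norm_num)
  have g1 : HasGaussianLaw Z₁ ℙ := ⟨by rw [hZ₁]; infer_instance⟩
  have g2 : HasGaussianLaw Z₂ ℙ := ⟨by rw [hZ₂]; infer_instance⟩
  have g := hindep.hasGaussianLaw g1 g2
  have gUV : HasGaussianLaw (fun ω => (a * Z₁ ω + b * Z₂ ω, -b * Z₁ ω + a * Z₂ ω)) ℙ :=
    g.map_fun
      ((a • ContinuousLinearMap.fst ℝ ℝ ℝ + b • ContinuousLinearMap.snd ℝ ℝ ℝ).prod
      ((-b) • ContinuousLinearMap.fst ℝ ℝ ℝ + a • ContinuousLinearMap.snd ℝ ℝ ℝ))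
  have bil := aux_bil Z₁ Z₂ hZ₁m hZ₂m hZ₁ hZ₂ hindep 0
  simp only [zero_add] at bil
  have mean : ∀ a b : ℝ, ∫ ω, (a * Z₁ ω + b * Z₂ ω) = 0 := by
    intro a b
    rw [integral_add (by fun_prop) (by fun_prop), integral_const_mul, integral_const_mul,
      aux_mean Z₁ hZ₁m hZ₁, aux_mean Z₂ hZ₂m hZ₂]
    simp
  constructor
  · rw [gUV.fst.map_eq_gaussianReal, mean, variance_of_integral_eq_zero (by fun_prop) (mean a b)]
    have := bil a b a b
    simp only [← pow_two] at this
    rw [this]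
    simp [hab]
  · refine gUV.indepFun_of_covariance_eq_zero ?_
    rw [covariance]
    simp only [mean, sub_zero, bil]
    ring

theorem second_moment_min_bivariate_gaussian
    {Ω : Type*} [MeasureSpace Ω] [IsProbabilityMeasure (ℙ : Measure Ω)]
    (Z₁ Z₂ : Ω → ℝ) (hZ₁m : Measurable Z₁) (hZ₂m : Measurable Z₂)
    (hZ₁ : Measure.map Z₁ ℙ = gaussianReal 0 1)
    (hZ₂ : Measure.map Z₂ ℙ = gaussianReal 0 1)
    (hindep : IndepFun Z₁ Z₂ ℙ)
    (μ₁ μ₂ σ₁ σ₂ ρ : ℝ) (hσ₁ : 0 < σ₁) (hσ₂ : 0 < σ₂)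
    (hρ : ρ ∈ Set.Ioo (-1 : ℝ) 1)
    (X₁ X₂ Y : Ω → ℝ)
    (hX₁ : X₁ = fun ω => μ₁ + σ₁ * Z₁ ω)
    (hX₂ : X₂ = fun ω => μ₂ + σ₂ * (ρ * Z₁ ω + Real.sqrt (1 - ρ ^ 2) * Z₂ ω))
    (hY : Y = fun ω => min (X₁ ω) (X₂ ω))
    (θ δ : ℝ)
    (hθ : θ = Real.sqrt (σ₁ ^ 2 + σ₂ ^ 2 - 2 * ρ * σ₁ * σ₂))
    (hθpos : 0 < θ)
    (hδ : δ = (μ₂ - μ₁) / θ) :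
    ∫ ω, (Y ω) ^ 2 =
      (σ₁ ^ 2 + μ₁ ^ 2) * stdNormalCdf δ + (σ₂ ^ 2 + μ₂ ^ 2) * stdNormalCdf (-δ) -
        (μ₁ + μ₂) * θ * stdNormalPdf δ := by
  have hs2 : Real.sqrt (1 - ρ ^ 2) ^ 2 = 1 - ρ ^ 2 :=
    Real.sq_sqrt (by nlinarith [hρ.1, hρ.2])
  generalize Real.sqrt (1 - ρ ^ 2) = s at hs2 hX₂
  have hθ2 : θ ^ 2 = σ₁ ^ 2 + σ₂ ^ 2 - 2 * ρ * σ₁ * σ₂ := by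
    rw [hθ, Real.sq_sqrt]
    exact (Real.sqrt_pos.1 (hθ ▸ hθpos)).le
  have hθ0 : θ ≠ 0 := hθpos.ne'
  obtain ⟨a, ha⟩ : ∃ a, a = (σ₁ - σ₂ * ρ) / θ := ⟨_, rfl⟩
  obtain ⟨b, hb⟩ : ∃ b, b = -(σ₂ * s) / θ := ⟨_, rfl⟩
  have ha' : θ * a = σ₁ - σ₂ * ρ := by rw [ha]; field_simp
  have hb' : θ * b = -(σ₂ * s) := by rw [hb]; field_simp
  have hδ' : θ * δ = μ₂ - μ₁ := by rw [hδ]; field_simp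
  have hab : a ^ 2 + b ^ 2 = 1 := by
    have : θ ^ 2 * (a ^ 2 + b ^ 2) = θ ^ 2 * 1 := by
      linear_combination (θ * a + (σ₁ - σ₂ * ρ)) * ha' + (θ * b - σ₂ * s) * hb' + σ₂ ^ 2 * hs2 - hθ2
    exact mul_left_cancel₀ (pow_ne_zero 2 hθ0) this
  obtain ⟨hUlaw, hUV⟩ := aux_rot Z₁ Z₂ hZ₁m hZ₂m hZ₁ hZ₂ hindep a b hab
  set U : Ω → ℝ := fun ω => a * Z₁ ω + b * Z₂ ω with hU
  set V : Ω → ℝ := fun ω => -b * Z₁ ω + a * Z₂ ω with hV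
  have hUm : Measurable U := by fun_prop
  have hVm : Measurable V := by fun_prop
  have l1 := aux_memLp Z₁ hZ₁m hZ₁
  have l2 := aux_memLp Z₂ hZ₂m hZ₂
  have i1 : Integrable Z₁ := l1.integrable (by norm_num)
  have i2 : Integrable Z₂ := l2.integrable (by norm_num)
  have iV : Integrable V := by fun_prop
  have hV0 : ∫ ω, V ω = 0 := by
    simp only [hV]
    rw [integral_add (by fun_prop) (by fun_prop), integral_const_mul, integral_const_mul,
      aux_mean Z₁ hZ₁m hZ₁, aux_mean Z₂ hZ₂m hZ₂]
    simp
  obtain ⟨c, hc⟩ : ∃ c, c = a * (σ₁ + σ₂ * ρ) + b * (σ₂ * s) := ⟨_, rfl⟩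
  obtain ⟨d, hd⟩ : ∃ d, d = -b * (σ₁ + σ₂ * ρ) + a * (σ₂ * s) := ⟨_, rfl⟩
  have hθc : θ * c = σ₁ ^ 2 - σ₂ ^ 2 := by
    rw [hc]
    linear_combination (σ₁ + σ₂ * ρ) * ha' + (σ₂ * s) * hb' - σ₂ ^ 2 * hs2
  have hsub : ∀ ω, X₁ ω - X₂ ω = θ * (U ω - δ) := by
    intro ω
    simp only [hX₁, hX₂, hU]
    linear_combination -Z₁ ω * ha' - Z₂ ω * hb' + hδ'
  have hadd : ∀ ω, X₁ ω + X₂ ω = (μ₁ + μ₂) + c * U ω + d * V ω := by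
    intro ω
    simp only [hX₁, hX₂, hU, hV, hc, hd]
    linear_combination (-(σ₁ + σ₂ * ρ) * Z₁ ω - (σ₂ * s) * Z₂ ω) * hab
  set g : ℝ → ℝ := (Set.Iic δ).indicator (fun u => (u - δ) * ((μ₁ + μ₂) + c * u)) with hg
  set k : ℝ → ℝ := (Set.Iic δ).indicator (fun u => u - δ) with hk
  have hpt : ∀ ω, Y ω ^ 2 = X₂ ω ^ 2 + θ * g (U ω) + (θ * d) * (k (U ω) * V ω) := by
    intro ω
    have h1 := hsub ω
    have h2 := hadd ω
    rw [hY]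
    by_cases hu : U ω ≤ δ
    · have : X₁ ω ≤ X₂ ω := by nlinarith
      simp only [hg, hk, Set.indicator_of_mem (show U ω ∈ Set.Iic δ from hu), min_eq_left this]
      linear_combination (X₁ ω + X₂ ω) * h1 + θ * (U ω - δ) * h2
    · have : X₂ ω ≤ X₁ ω := by nlinarith
      simp only [hg, hk, Set.indicator_of_notMem (show U ω ∉ Set.Iic δ from hu), min_eq_right this]
      ring
  have ig' : Integrable g (gaussianReal 0 1) := by
    refine Integrable.indicator ?_ measurableSet_Iic
    refine (aux_int_poly c (μ₁ + μ₂ - δ * c) (-δ * (μ₁ + μ₂))).congr (ae_of_all _ fun u => ?_)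
    ring
  have ik' : Integrable k (gaussianReal 0 1) := by
    refine Integrable.indicator ?_ measurableSet_Iic
    refine (aux_int_poly 0 1 (-δ)).congr (ae_of_all _ fun u => ?_)
    ring
  have ig : Integrable (fun ω => g (U ω)) := by
    rw [← hUlaw] at ig'; exact ig'.comp_measurable hUm
  have ik : Integrable (fun ω => k (U ω)) := by
    rw [← hUlaw] at ik'; exact ik'.comp_measurable hUm
  have hkm : Measurable k := by
    apply Measurable.indicator _ measurableSet_Iic
    fun_prop
  have hkV : IndepFun (fun ω => k (U ω)) V ℙ := hUV.comp hkm measurable_id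
  have ikV : Integrable (fun ω => k (U ω) * V ω) := hkV.integrable_mul ik iV
  have hkV0 : ∫ ω, k (U ω) * V ω = 0 := by
    rw [hkV.integral_fun_mul_eq_mul_integral ik.aestronglyMeasurable iV.aestronglyMeasurable, hV0,
      mul_zero]
  have hgI : ∫ ω, g (U ω) = (c - δ * (μ₁ + μ₂)) * stdNormalCdf δ - (μ₁ + μ₂) * stdNormalPdf δ := by
    rw [← aux_key, ← hUlaw, integral_map hUm.aemeasurable]
    rw [hUlaw]; exact ig'.aestronglyMeasurable
  have hX2e : ∀ ω, X₂ ω ^ 2 = (μ₂ + (σ₂ * ρ) * Z₁ ω + (σ₂ * s) * Z₂ ω) *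
      (μ₂ + (σ₂ * ρ) * Z₁ ω + (σ₂ * s) * Z₂ ω) := by
    intro ω; rw [hX₂]; ring
  have iX2 : Integrable (fun ω => X₂ ω ^ 2) := by
    refine MemLp.integrable_sq ?_
    rw [hX₂]
    exact (memLp_const μ₂).add (((l1.const_mul ρ).add (l2.const_mul s)).const_mul σ₂)
  have hX2I : ∫ ω, X₂ ω ^ 2 = μ₂ ^ 2 + σ₂ ^ 2 := by
    simp_rw [hX2e]
    rw [aux_bil Z₁ Z₂ hZ₁m hZ₂m hZ₁ hZ₂ hindep]
    linear_combination σ₂ ^ 2 * hs2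
  simp_rw [hpt]
  have iS : Integrable (fun ω => X₂ ω ^ 2 + θ * g (U ω)) := iX2.add (ig.const_mul θ)
  rw [integral_add iS (ikV.const_mul _), integral_add iX2 (ig.const_mul θ),
    integral_const_mul, integral_const_mul, hkV0, hgI, hX2I, aux_cdf_neg]
  linear_combination stdNormalCdf δ * hθc - (μ₁ + μ₂) * stdNormalCdf δ * hδ'
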